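/- Let H be a quasi-Hopf algebra, B a right H-comodule algebra, and v : H → B a morphism of right H-comodule algebras. Define E : B → B by E(b) = v(q¹)b₍₀₎v(βS(q²b₍₁₎)), set A = E(B), h▷b = E(v(h)b), and a*a′ = E(aa′) for a, a′ ∈ A. Then for all a, a′ ∈ A: a*a′ = v(q¹)(t¹▷a)v(t²)(z¹▷a′)v(z²βS(q²t³z³)), where t¹⊗t²⊗t³ and z¹⊗z²⊗z³ are two copies of Φ⁻¹. -/

import Mathlib

open TensorProduct BigOperators

/-- A quasi-bialgebra in the sense of Drinfeld. -/
structure QuasiBialgebra (k H : Type*) [Field k] [Ring H] [Algebra k H] where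
  comul : H →ₐ[k] H ⊗[k] H
  counit : H →ₐ[k] k
  Phi : H ⊗[k] (H ⊗[k] H)
  PhiInv : H ⊗[k] (H ⊗[k] H)
  Phi_mul_inv : Phi * PhiInv = 1
  inv_mul_Phi : PhiInv * Phi = 1
  comul_coassoc : ∀ h : H,
    (Algebra.TensorProduct.map (AlgHom.id k H) comul) (comul h)
      = Phi * (Algebra.TensorProduct.assoc k k k H H H)
          ((Algebra.TensorProduct.map comul (AlgHom.id k H)) (comul h)) * PhiInv
  counit_comul_right : ∀ h : H,
    (Algebra.TensorProduct.map (AlgHom.id k H) counit) (comul h) = h ⊗ₜ[k] (1 : k)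
  counit_comul_left : ∀ h : H,
    (Algebra.TensorProduct.map counit (AlgHom.id k H)) (comul h) = (1 : k) ⊗ₜ[k] h
  pentagon :
    ((1 : H) ⊗ₜ[k] Phi)
      * (Algebra.TensorProduct.map (AlgHom.id k H)
          (((Algebra.TensorProduct.assoc k k k H H H).toAlgHom).comp
            (Algebra.TensorProduct.map comul (AlgHom.id k H)))) Phi
      * (Algebra.TensorProduct.map (AlgHom.id k H)
          (Algebra.TensorProduct.map (AlgHom.id k H)
            (Algebra.TensorProduct.includeLeft : H →ₐ[k] H ⊗[k] H))) Phi
    = (Algebra.TensorProduct.map (AlgHom.id k H)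
          (Algebra.TensorProduct.map (AlgHom.id k H) comul)) Phi
      * (Algebra.TensorProduct.assoc k k k H H (H ⊗[k] H))
          ((Algebra.TensorProduct.map comul (AlgHom.id k (H ⊗[k] H))) Phi)
  counit_Phi : (Algebra.TensorProduct.map (AlgHom.id k H)
      (Algebra.TensorProduct.map counit (AlgHom.id k H))) Phi = 1

/-- A quasi-Hopf algebra: a quasi-bialgebra with antipode `S` (a bijective algebra
anti-automorphism with inverse `Sinv`) and elements `alpha`, `beta`, normalized so that
`counit alpha = counit beta = 1`.  Identities involving Sweedler components are stated
universally over all finite representations of the relevant tensors. -/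
structure QuasiHopfAlgebra (k H : Type*) [Field k] [Ring H] [Algebra k H] extends
    QuasiBialgebra k H where
  alpha : H
  beta : H
  S : H →ₗ[k] H
  Sinv : H →ₗ[k] H
  S_one : S 1 = 1
  S_mul : ∀ a b : H, S (a * b) = S b * S a
  Sinv_S : ∀ h : H, Sinv (S h) = h
  S_Sinv : ∀ h : H, S (Sinv h) = h
  antipode_left : ∀ h : H, ∀ (n : ℕ) (d1 d2 : Fin n → H),
    comul h = ∑ i, d1 i ⊗ₜ[k] d2 i →
    ∑ i, S (d1 i) * alpha * d2 i = counit h • alpha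
  antipode_right : ∀ h : H, ∀ (n : ℕ) (d1 d2 : Fin n → H),
    comul h = ∑ i, d1 i ⊗ₜ[k] d2 i →
    ∑ i, d1 i * beta * S (d2 i) = counit h • beta
  antipode_Phi : ∀ (n : ℕ) (X1 X2 X3 : Fin n → H),
    Phi = ∑ i, X1 i ⊗ₜ[k] (X2 i ⊗ₜ[k] X3 i) →
    ∑ i, X1 i * beta * S (X2 i) * alpha * X3 i = 1
  antipode_PhiInv : ∀ (n : ℕ) (x1 x2 x3 : Fin n → H),
    PhiInv = ∑ i, x1 i ⊗ₜ[k] (x2 i ⊗ₜ[k] x3 i) →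
    ∑ i, S (x1 i) * alpha * x2 i * beta * S (x3 i) = 1
  counit_alpha : counit alpha = 1
  counit_beta : counit beta = 1
/-- A right `H`-comodule algebra over a quasi-bialgebra `Q`. -/
structure RightComoduleAlgebra {k H : Type*} [Field k] [Ring H] [Algebra k H]
    (Q : QuasiBialgebra k H) (B : Type*) [Ring B] [Algebra k B] where
  coact : B →ₐ[k] B ⊗[k] H
  PhiRho : B ⊗[k] (H ⊗[k] H)
  PhiRhoInv : B ⊗[k] (H ⊗[k] H)
  PhiRho_mul_inv : PhiRho * PhiRhoInv = 1
  inv_mul_PhiRho : PhiRhoInv * PhiRho = 1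
  coact_coassoc : ∀ b : B,
    PhiRho * (Algebra.TensorProduct.assoc k k k B H H)
        ((Algebra.TensorProduct.map coact (AlgHom.id k H)) (coact b))
      = (Algebra.TensorProduct.map (AlgHom.id k B) Q.comul) (coact b) * PhiRho
  pentagon :
    ((1 : B) ⊗ₜ[k] Q.Phi)
      * (Algebra.TensorProduct.map (AlgHom.id k B)
          (((Algebra.TensorProduct.assoc k k k H H H).toAlgHom).comp
            (Algebra.TensorProduct.map Q.comul (AlgHom.id k H)))) PhiRho
      * (Algebra.TensorProduct.map (AlgHom.id k B)
          (Algebra.TensorProduct.map (AlgHom.id k H)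
            (Algebra.TensorProduct.includeLeft : H →ₐ[k] H ⊗[k] H))) PhiRho
    = (Algebra.TensorProduct.map (AlgHom.id k B)
          (Algebra.TensorProduct.map (AlgHom.id k H) Q.comul)) PhiRho
      * (Algebra.TensorProduct.assoc k k k B H (H ⊗[k] H))
          ((Algebra.TensorProduct.map coact (AlgHom.id k (H ⊗[k] H))) PhiRho)
  counit_coact : ∀ b : B,
    (Algebra.TensorProduct.map (AlgHom.id k B) Q.counit) (coact b) = b ⊗ₜ[k] (1 : k)
  counit_PhiRho_mid : (Algebra.TensorProduct.map (AlgHom.id k B)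
      (Algebra.TensorProduct.map Q.counit (AlgHom.id k H))) PhiRho = 1
  counit_PhiRho_right : (Algebra.TensorProduct.map (AlgHom.id k B)
      (Algebra.TensorProduct.map (AlgHom.id k H) Q.counit)) PhiRho = 1

/-- `v : H → B` is a morphism of right `H`-comodule algebras from `H` (with its canonical
right `H`-comodule algebra structure `ρ = Δ`, `Φ_ρ = Φ`) to `B`. -/
def IsComodAlgMorphismFromH {k H B : Type*} [Field k] [Ring H] [Algebra k H]
    [Ring B] [Algebra k B] {Q : QuasiBialgebra k H}
    (R : RightComoduleAlgebra Q B) (v : H →ₐ[k] B) : Prop :=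
  (∀ h : H, R.coact (v h) = (Algebra.TensorProduct.map v (AlgHom.id k H)) (Q.comul h))
  ∧ R.PhiRho = (Algebra.TensorProduct.map v (AlgHom.id k (H ⊗[k] H))) Q.Phi

/-- Characterization of the canonical projection `E : B → B`,
`E(b) = v(q¹) b₍₀₎ v(β S(q² b₍₁₎))`, where `q_R = q¹ ⊗ q² = X¹ ⊗ S⁻¹(α X³) X²`,
stated universally over finite representations of `Φ` and of `ρ(b)`. -/
def IsCanonicalProjection {k H B : Type*} [Field k] [Ring H] [Algebra k H]
    [Ring B] [Algebra k B] (Q : QuasiHopfAlgebra k H)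
    (R : RightComoduleAlgebra Q.toQuasiBialgebra B) (v : H →ₐ[k] B) (E : B →ₗ[k] B) : Prop :=
  ∀ (b : B) (n : ℕ) (X1 X2 X3 : Fin n → H),
    Q.Phi = ∑ i, X1 i ⊗ₜ[k] (X2 i ⊗ₜ[k] X3 i) →
    ∀ (p : ℕ) (b0 : Fin p → B) (b1 : Fin p → H),
      R.coact b = ∑ j, b0 j ⊗ₜ[k] b1 j →
      E b = ∑ i, ∑ j,
        v (X1 i) * b0 j * v (Q.beta * Q.S (Q.Sinv (Q.alpha * X3 i) * X2 i * b1 j))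

/-!
Write `E(b)` as the image of `Φ_ρ (ρ(b) ⊗ 1)` under the contraction `b ⊗ x ⊗ y ↦ b v(β S(x) α y)`.
By the antipode axioms the contraction absorbs a factor `Δ(h)` on the left, and a factor `ρ(v(h))`
on the right, as the scalar `ε(h)`. Three identities follow:

* `E(b v(h)) = ε(h) E(b)`, hence `E(b E(c)) = E(b c)`;
* `E(b₍₀₎) v(b₍₁₎) = b`, by coassociativity of `ρ`;
* `E(a₍₀₎) ⊗ a₍₁₎ = a ⊗ 1` for `a = E(b)`, by the pentagon for `Φ_ρ`.

For such an `a`, the second identity on the first leg recovers `ρ(a)` from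
`(ρ ⊗ id)(ρ(a)) = Φ_ρ⁻¹ (id ⊗ Δ)(ρ(a)) Φ_ρ` with `E` applied to its first leg. There the first
identity removes `Φ_ρ` and the third replaces `ρ(a)` by `a ⊗ 1`, which leaves
`ρ(a) = E(v(x¹) a) v(x²) ⊗ x³`. Expanding `E(a a')` with this formula for both factors is the claim.
-/

section TensorProduct

variable {k : Type*} [CommSemiring k]

theorem exists_sum_tmul_tmul_eq {M N P : Type*} [AddCommMonoid M] [Module k M] [AddCommMonoid N]
    [Module k N] [AddCommMonoid P] [Module k P] (x : M ⊗[k] (N ⊗[k] P)) :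
    ∃ (n : ℕ) (a : Fin n → M) (b : Fin n → N) (c : Fin n → P),
      x = ∑ i, a i ⊗ₜ[k] (b i ⊗ₜ[k] c i) := by
  obtain ⟨n, a, w, rfl⟩ := TensorProduct.exists_sum_tmul_eq x
  choose m b c hw using fun i => TensorProduct.exists_sum_tmul_eq (w i)
  refine ⟨∑ i, m i, fun s => a (finSigmaFinEquiv.symm s).1,
    fun s => b _ (finSigmaFinEquiv.symm s).2, fun s => c _ (finSigmaFinEquiv.symm s).2, ?_⟩
  rw [finSigmaFinEquiv.symm.sum_comp fun s : Σ i, Fin (m i) =>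
    a s.1 ⊗ₜ[k] (b s.1 s.2 ⊗ₜ[k] c s.1 s.2), Fintype.sum_sigma]
  simp only [← TensorProduct.tmul_sum, ← hw]

section Congr

variable {A C M N P P' : Type*} [Semiring A] [Algebra k A] [Semiring C] [Algebra k C]
  [AddCommMonoid M] [Module k M] [AddCommMonoid N] [Module k N]
  [AddCommMonoid P] [Module k P] [AddCommMonoid P'] [Module k P']
  {F : A →ₗ[k] P} {G : C →ₗ[k] P'} {f f' : M →ₗ[k] A} {g g' : N →ₗ[k] C}

theorem map_mul_map_congr (hF : ∀ a m, F (a * f m) = F (a * f' m))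
    (hG : ∀ c n, G (c * g n) = G (c * g' n)) (w : A ⊗[k] C) (x : M ⊗[k] N) :
    TensorProduct.map F G (w * TensorProduct.map f g x)
      = TensorProduct.map F G (w * TensorProduct.map f' g' x) := by
  obtain ⟨n, a, c, rfl⟩ := TensorProduct.exists_sum_tmul_eq w
  obtain ⟨m, y, z, rfl⟩ := TensorProduct.exists_sum_tmul_eq x
  simp [Finset.sum_mul_sum, hF, hG]

theorem map_map_mul_congr (hF : ∀ a m, F (f m * a) = F (f' m * a))
    (hG : ∀ c n, G (g n * c) = G (g' n * c)) (x : M ⊗[k] N) (w : A ⊗[k] C) :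
    TensorProduct.map F G (TensorProduct.map f g x * w)
      = TensorProduct.map F G (TensorProduct.map f' g' x * w) := by
  obtain ⟨n, a, c, rfl⟩ := TensorProduct.exists_sum_tmul_eq w
  obtain ⟨m, y, z, rfl⟩ := TensorProduct.exists_sum_tmul_eq x
  simp [Finset.sum_mul_sum, hF, hG]

end Congr

variable {A B C M N : Type*} [Semiring A] [Algebra k A] [Semiring B] [Algebra k B]
  [Semiring C] [Algebra k C] [Semiring M] [Algebra k M] [Semiring N] [Algebra k N]

/-- `f ⊗ id_M`, followed by the rebracketing `(B ⊗ C) ⊗ M ≃ B ⊗ (C ⊗ M)`. All iterated tensor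
products are bracketed to the right, so for `f = Δ` or `f = ρ` this is how a coproduct or a coaction
is applied to the first leg of a tensor. -/
noncomputable def rTensorAssoc (f : A →ₐ[k] B ⊗[k] C) (M : Type*) [Semiring M] [Algebra k M] :
    A ⊗[k] M →ₐ[k] B ⊗[k] (C ⊗[k] M) :=
  (Algebra.TensorProduct.assoc k k k B C M).toAlgHom.comp
    (Algebra.TensorProduct.map f (AlgHom.id k M))

theorem rTensorAssoc_tmul (f : A →ₐ[k] B ⊗[k] C) (a : A) (m : M) :
    rTensorAssoc f M (a ⊗ₜ[k] m) = Algebra.TensorProduct.assoc k k k B C M (f a ⊗ₜ[k] m) :=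
  rfl

theorem rTensorAssoc_tmul_one (f : A →ₐ[k] B ⊗[k] C) (a : A) :
    rTensorAssoc f M (a ⊗ₜ[k] 1)
      = Algebra.TensorProduct.map (AlgHom.id k B) Algebra.TensorProduct.includeLeft (f a) := by
  obtain ⟨n, b, c, h⟩ := TensorProduct.exists_sum_tmul_eq (f a)
  simp [rTensorAssoc_tmul, h, TensorProduct.sum_tmul]

theorem rTensorAssoc_map (f : A →ₐ[k] B ⊗[k] C) (g : M →ₐ[k] N) (x : A ⊗[k] M) :
    rTensorAssoc f N (Algebra.TensorProduct.map (AlgHom.id k A) g x)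
      = Algebra.TensorProduct.map (AlgHom.id k B) (Algebra.TensorProduct.map (AlgHom.id k C) g)
          (rTensorAssoc f M x) := by
  obtain ⟨n, a, m, rfl⟩ := TensorProduct.exists_sum_tmul_eq x
  simp only [map_sum]
  refine Finset.sum_congr rfl fun i _ => ?_
  obtain ⟨l, b, c, h⟩ := TensorProduct.exists_sum_tmul_eq (f (a i))
  simp [rTensorAssoc_tmul, h, TensorProduct.sum_tmul]

/-- The linear map `b ⊗ c ⊗ m ↦ b v(c) ⊗ m`, which multiplies the first two legs along `v`. -/
noncomputable def mulMapLeft (v : C →ₗ[k] B) (M : Type*) [AddCommMonoid M] [Module k M] :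
    B ⊗[k] (C ⊗[k] M) →ₗ[k] B ⊗[k] M :=
  TensorProduct.map (LinearMap.mul' k B ∘ₗ TensorProduct.map LinearMap.id v) LinearMap.id ∘ₗ
    (TensorProduct.assoc k B C M).symm.toLinearMap

theorem mulMapLeft_tmul (v : C →ₗ[k] B) (b : B) (c : C) (m : M) :
    mulMapLeft v M (b ⊗ₜ[k] (c ⊗ₜ[k] m)) = (b * v c) ⊗ₜ[k] m :=
  rfl

end TensorProduct

namespace QuasiBialgebra

variable {k H M N : Type*} [Field k] [Ring H] [Algebra k H] [Semiring M] [Algebra k M]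
  [Semiring N] [Algebra k N] (Q : QuasiBialgebra k H)

/-- `ε ⊗ id : H ⊗ M → M`, the counit applied to the left tensor factor. -/
noncomputable def counitLeft (M : Type*) [Semiring M] [Algebra k M] : H ⊗[k] M →ₐ[k] M :=
  (Algebra.TensorProduct.lid k M).toAlgHom.comp
    (Algebra.TensorProduct.map Q.counit (AlgHom.id k M))

/-- `id ⊗ ε : M ⊗ H → M`, the counit applied to the right tensor factor. -/
noncomputable def counitRight (M : Type*) [Semiring M] [Algebra k M] : M ⊗[k] H →ₐ[k] M :=
  (Algebra.TensorProduct.rid k k M).toAlgHom.comp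
    (Algebra.TensorProduct.map (AlgHom.id k M) Q.counit)

theorem counitLeft_tmul (h : H) (m : M) : Q.counitLeft M (h ⊗ₜ[k] m) = Q.counit h • m := by
  simp [counitLeft]

theorem counitRight_tmul (m : M) (h : H) : Q.counitRight M (m ⊗ₜ[k] h) = Q.counit h • m := by
  simp [counitRight]

theorem counitLeft_comul (h : H) : Q.counitLeft H (Q.comul h) = h := by
  simp [counitLeft, Q.counit_comul_left]

theorem counitRight_comul (h : H) : Q.counitRight H (Q.comul h) = h := by
  simp [counitRight, Q.counit_comul_right]

theorem counitLeft_map (f : M →ₐ[k] N) (x : H ⊗[k] M) :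
    Q.counitLeft N (Algebra.TensorProduct.map (AlgHom.id k H) f x) = f (Q.counitLeft M x) := by
  obtain ⟨n, h, m, rfl⟩ := TensorProduct.exists_sum_tmul_eq x
  simp [counitLeft_tmul]

theorem counitLeft_rTensorAssoc_comul (x : H ⊗[k] M) :
    Q.counitLeft (H ⊗[k] M) (rTensorAssoc Q.comul M x) = x := by
  have counitLeft_assoc (w : H ⊗[k] H) (m : M) :
      Q.counitLeft (H ⊗[k] M) (Algebra.TensorProduct.assoc k k k H H M (w ⊗ₜ[k] m))
        = Q.counitLeft H w ⊗ₜ[k] m := by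
    obtain ⟨n, a, b, rfl⟩ := TensorProduct.exists_sum_tmul_eq w
    simp [counitLeft_tmul, TensorProduct.sum_tmul, TensorProduct.smul_tmul']
  obtain ⟨n, h, m, rfl⟩ := TensorProduct.exists_sum_tmul_eq x
  simp [rTensorAssoc_tmul, counitLeft_assoc, counitLeft_comul]

theorem map_counitLeft_Phi :
    Algebra.TensorProduct.map (AlgHom.id k H) (Q.counitLeft H) Q.Phi = 1 := by
  rw [counitLeft, Algebra.TensorProduct.map_id_comp, AlgHom.comp_apply, Q.counit_Phi, map_one]

theorem counitLeft_Phi : Q.counitLeft (H ⊗[k] H) Q.Phi = 1 := by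
  have counitLeft_twice : Q.counitLeft H (Q.counitLeft (H ⊗[k] H) Q.Phi) = 1 := by
    rw [← counitLeft_map, map_counitLeft_Phi, map_one]
  have idempotent : Q.counitLeft (H ⊗[k] H) Q.Phi * Q.counitLeft (H ⊗[k] H) Q.Phi
      = Q.counitLeft (H ⊗[k] H) Q.Phi := by
    have pentagon : (1 : H) ⊗ₜ[k] Q.Phi
          * Algebra.TensorProduct.map (AlgHom.id k H) (rTensorAssoc Q.comul H) Q.Phi
          * Algebra.TensorProduct.map (AlgHom.id k H) (Algebra.TensorProduct.map (AlgHom.id k H)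
              Algebra.TensorProduct.includeLeft) Q.Phi
        = Algebra.TensorProduct.map (AlgHom.id k H)
            (Algebra.TensorProduct.map (AlgHom.id k H) Q.comul) Q.Phi
          * rTensorAssoc Q.comul (H ⊗[k] H) Q.Phi := Q.pentagon
    simpa only [map_mul, counitLeft_tmul, counitLeft_map, counitLeft_rTensorAssoc_comul,
      counitLeft_twice, map_one, one_smul, one_mul, mul_one]
      using congrArg (fun x => Q.counitLeft _ (Q.counitLeft _ x)) pentagon
  have isUnit : IsUnit (Q.counitLeft (H ⊗[k] H) Q.Phi) :=
    IsUnit.map _ ⟨⟨Q.Phi, Q.PhiInv, Q.Phi_mul_inv, Q.inv_mul_Phi⟩, rfl⟩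
  exact isUnit.mul_left_cancel (idempotent.trans (mul_one _).symm)

end QuasiBialgebra

namespace QuasiHopfAlgebra

variable {k H B : Type*} [Field k] [Ring H] [Algebra k H] [Ring B] [Algebra k B]
  (Q : QuasiHopfAlgebra k H)

theorem counit_S (h : H) : Q.counit (Q.S h) = Q.counit h := by
  obtain ⟨n, a, b, hab⟩ := TensorProduct.exists_sum_tmul_eq (Q.comul h)
  have sum_smul : ∑ i, Q.counit (b i) • a i = h := by
    simpa [hab, Q.counitRight_tmul] using Q.counitRight_comul h
  calc Q.counit (Q.S h) = ∑ i, Q.counit (Q.S (a i)) * Q.counit (b i) := by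
        conv_lhs => rw [← sum_smul]
        simp [mul_comm]
    _ = Q.counit (∑ i, Q.S (a i) * Q.alpha * b i) := by simp [Q.counit_alpha]
    _ = Q.counit h := by simp [Q.antipode_left h n a b hab, Q.counit_alpha]

/-- The linear map `b ⊗ x ⊗ y ↦ b v(β S(x) α y)`, by which both the antipode axiom
`X¹ β S(X²) α X³ = 1` and the projection `E` are expressed without choosing representatives. -/
noncomputable def contract (v : H →ₐ[k] B) : B ⊗[k] (H ⊗[k] H) →ₗ[k] B :=
  LinearMap.mul' k B ∘ₗ TensorProduct.map LinearMap.id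
    (v.toLinearMap ∘ₗ LinearMap.mulLeft k Q.beta ∘ₗ LinearMap.mul' k H ∘ₗ
      TensorProduct.map (LinearMap.mulRight k Q.alpha ∘ₗ Q.S) LinearMap.id)

theorem contract_tmul (v : H →ₐ[k] B) (b : B) (x y : H) :
    Q.contract v (b ⊗ₜ[k] (x ⊗ₜ[k] y)) = b * v (Q.beta * (Q.S x * Q.alpha * y)) :=
  rfl

theorem contract_map_Phi (v : H →ₐ[k] B) :
    Q.contract v (Algebra.TensorProduct.map v (AlgHom.id k (H ⊗[k] H)) Q.Phi) = 1 := by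
  obtain ⟨n, a, b, c, h⟩ := exists_sum_tmul_tmul_eq Q.Phi
  rw [← map_one v, ← Q.antipode_Phi n a b c h, h]
  simp [contract_tmul, mul_assoc]

theorem contract_id_Phi : Q.contract (AlgHom.id k H) Q.Phi = 1 := by
  simpa using Q.contract_map_Phi (AlgHom.id k H)

theorem contract_map_comul_mul (v : H →ₐ[k] B) (w : B ⊗[k] H) (x : B ⊗[k] (H ⊗[k] H)) :
    Q.contract v (Algebra.TensorProduct.map (AlgHom.id k B) Q.comul w * x)
      = Q.counitRight B w * Q.contract v x := by
  have contract_tmul_comul_mul (b b' : B) (h y z : H) :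
      Q.contract v ((b * b') ⊗ₜ[k] (Q.comul h * y ⊗ₜ[k] z))
        = Q.counit h • (b * Q.contract v (b' ⊗ₜ[k] (y ⊗ₜ[k] z))) := by
    obtain ⟨n, d, e, hde⟩ := TensorProduct.exists_sum_tmul_eq (Q.comul h)
    calc _ = b * (b' * v (Q.beta * (Q.S y * (∑ i, Q.S (d i) * Q.alpha * e i) * z))) := by
          simp [hde, contract_tmul, Q.S_mul, Finset.mul_sum, Finset.sum_mul,
            TensorProduct.tmul_sum, mul_assoc]
      _ = _ := by rw [Q.antipode_left h n d e hde]; simp [contract_tmul]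
  obtain ⟨n, b, h, rfl⟩ := TensorProduct.exists_sum_tmul_eq w
  obtain ⟨m, b', y, z, rfl⟩ := exists_sum_tmul_tmul_eq x
  simp [Finset.sum_mul_sum, contract_tmul_comul_mul, Q.counitRight_tmul]

theorem contract_mul_rTensorAssoc_map (v : H →ₐ[k] B) {ρ : B →ₐ[k] B ⊗[k] H}
    (hρ : ∀ h, ρ (v h) = Algebra.TensorProduct.map v (AlgHom.id k H) (Q.comul h))
    (x : B ⊗[k] (H ⊗[k] H)) (u : H ⊗[k] H) :
    Q.contract v (x * rTensorAssoc ρ H (Algebra.TensorProduct.map v (AlgHom.id k H) u))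
      = Q.contract v x * v (Q.counitLeft H u) := by
  have contract_mul_assoc_comul (b : B) (y z h l : H) :
      Q.contract v (b ⊗ₜ[k] (y ⊗ₜ[k] z) * rTensorAssoc ρ H (v h ⊗ₜ[k] l))
        = Q.counit h • (Q.contract v (b ⊗ₜ[k] (y ⊗ₜ[k] z)) * v l) := by
    obtain ⟨n, d, e, hde⟩ := TensorProduct.exists_sum_tmul_eq (Q.comul h)
    calc _ = b * v ((∑ i, d i * Q.beta * Q.S (e i)) * (Q.S y * Q.alpha * z * l)) := by
          simp [rTensorAssoc_tmul, hρ, hde, contract_tmul, Q.S_mul, Finset.mul_sum,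
            Finset.sum_mul, TensorProduct.sum_tmul, mul_assoc]
      _ = _ := by rw [Q.antipode_right h n d e hde]; simp [contract_tmul, mul_assoc]
  obtain ⟨n, b, y, z, rfl⟩ := exists_sum_tmul_tmul_eq x
  obtain ⟨m, h, l, rfl⟩ := TensorProduct.exists_sum_tmul_eq u
  simp [Finset.sum_mul_sum, contract_mul_assoc_comul, Q.counitLeft_tmul]

theorem contract_id_mul_rTensorAssoc_comul (x : H ⊗[k] (H ⊗[k] H)) (u : H ⊗[k] H) :
    Q.contract (AlgHom.id k H) (x * rTensorAssoc Q.comul H u)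
      = Q.contract (AlgHom.id k H) x * Q.counitLeft H u := by
  simpa using Q.contract_mul_rTensorAssoc_map (AlgHom.id k H) (ρ := Q.comul) (by simp) x u

theorem contract_mul_one_tmul_one_tmul (v : H →ₐ[k] B) (x : B ⊗[k] (H ⊗[k] H)) (h : H) :
    Q.contract v (x * 1 ⊗ₜ[k] (1 ⊗ₜ[k] h)) = Q.contract v x * v h := by
  obtain ⟨n, b, y, z, rfl⟩ := exists_sum_tmul_tmul_eq x
  simp [Finset.sum_mul, contract_tmul, mul_assoc]

end QuasiHopfAlgebra

namespace RightComoduleAlgebra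

section QuasiBialgebra

variable {k H B : Type*} [Field k] [Ring H] [Algebra k H] [Ring B] [Algebra k B]
  {Q : QuasiBialgebra k H} (R : RightComoduleAlgebra Q B)

theorem counitRight_coact (b : B) : Q.counitRight B (R.coact b) = b := by
  simp [QuasiBialgebra.counitRight, R.counit_coact]

theorem map_counitLeft_PhiRho :
    Algebra.TensorProduct.map (AlgHom.id k B) (Q.counitLeft H) R.PhiRho = 1 := by
  rw [QuasiBialgebra.counitLeft, Algebra.TensorProduct.map_id_comp, AlgHom.comp_apply,
    R.counit_PhiRho_mid, map_one]

theorem map_counitRight_PhiRho :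
    Algebra.TensorProduct.map (AlgHom.id k B) (Q.counitRight H) R.PhiRho = 1 := by
  rw [QuasiBialgebra.counitRight, Algebra.TensorProduct.map_id_comp, AlgHom.comp_apply,
    R.counit_PhiRho_right, map_one]

theorem PhiRho_mul_rTensorAssoc_coact (b : B) :
    R.PhiRho * rTensorAssoc R.coact H (R.coact b)
      = Algebra.TensorProduct.map (AlgHom.id k B) Q.comul (R.coact b) * R.PhiRho :=
  R.coact_coassoc b

/-- The linear map `b ↦ Φ_ρ (ρ(b) ⊗ 1)`, from which `E(b)` arises by contraction. -/
noncomputable def twistedCoact : B →ₗ[k] B ⊗[k] (H ⊗[k] H) :=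
  LinearMap.mulLeft k R.PhiRho ∘ₗ (rTensorAssoc R.coact H).toLinearMap ∘ₗ
    (Algebra.TensorProduct.includeLeft : B →ₐ[k] B ⊗[k] H).toLinearMap

theorem twistedCoact_apply (b : B) :
    R.twistedCoact b = R.PhiRho * rTensorAssoc R.coact H (b ⊗ₜ[k] 1) :=
  rfl

theorem map_counitLeft_twistedCoact (b : B) :
    Algebra.TensorProduct.map (AlgHom.id k B) (Q.counitLeft H) (R.twistedCoact b)
      = b ⊗ₜ[k] 1 := by
  have map_counitLeft_includeLeft (w : B ⊗[k] H) :
      Algebra.TensorProduct.map (AlgHom.id k B) (Q.counitLeft H)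
          (Algebra.TensorProduct.map (AlgHom.id k B) Algebra.TensorProduct.includeLeft w)
        = Q.counitRight B w ⊗ₜ[k] 1 := by
    obtain ⟨n, c, h, rfl⟩ := TensorProduct.exists_sum_tmul_eq w
    simp [Q.counitLeft_tmul, Q.counitRight_tmul, TensorProduct.sum_tmul, TensorProduct.smul_tmul']
  rw [twistedCoact_apply, map_mul, map_counitLeft_PhiRho, one_mul, rTensorAssoc_tmul_one,
    map_counitLeft_includeLeft, counitRight_coact]

set_option maxSynthPendingDepth 4 in
theorem pentagon_twistedCoact (b : B) :
    (1 : B) ⊗ₜ[k] Q.Phi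
        * Algebra.TensorProduct.map (AlgHom.id k B) (rTensorAssoc Q.comul H) (R.twistedCoact b)
        * Algebra.TensorProduct.map (AlgHom.id k B) (Algebra.TensorProduct.map (AlgHom.id k H)
            Algebra.TensorProduct.includeLeft) R.PhiRho
      = Algebra.TensorProduct.map (AlgHom.id k B)
          (Algebra.TensorProduct.map (AlgHom.id k H) Q.comul) R.PhiRho
        * rTensorAssoc R.coact (H ⊗[k] H) (R.twistedCoact b) := by
  set Δ₂ := Algebra.TensorProduct.map (AlgHom.id k B) (rTensorAssoc Q.comul H)
  set Δ₃ := Algebra.TensorProduct.map (AlgHom.id k B)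
    (Algebra.TensorProduct.map (AlgHom.id k H) Q.comul)
  set ι := Algebra.TensorProduct.map (AlgHom.id k B) (Algebra.TensorProduct.map (AlgHom.id k H)
    (Algebra.TensorProduct.includeLeft : H →ₐ[k] H ⊗[k] H))
  set ρ₂ := rTensorAssoc R.coact (H ⊗[k] H)
  have pentagon : (1 : B) ⊗ₜ[k] Q.Phi * Δ₂ R.PhiRho * ι R.PhiRho = Δ₃ R.PhiRho * ρ₂ R.PhiRho :=
    R.pentagon
  have comul_coact : Δ₂ (rTensorAssoc R.coact H (b ⊗ₜ[k] 1))
      = ι (Algebra.TensorProduct.map (AlgHom.id k B) Q.comul (R.coact b)) := by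
    rw [rTensorAssoc_tmul_one]
    obtain ⟨n, c, h, hc⟩ := TensorProduct.exists_sum_tmul_eq (R.coact b)
    simp [Δ₂, ι, hc, rTensorAssoc_tmul_one]
  have coact_coact : ρ₂ (rTensorAssoc R.coact H (b ⊗ₜ[k] 1))
      = ι (rTensorAssoc R.coact H (R.coact b)) := by
    rw [rTensorAssoc_tmul_one, rTensorAssoc_map]
  calc (1 : B) ⊗ₜ[k] Q.Phi * Δ₂ (R.twistedCoact b) * ι R.PhiRho
      = (1 : B) ⊗ₜ[k] Q.Phi * Δ₂ R.PhiRho * ι (Algebra.TensorProduct.map (AlgHom.id k B) Q.comul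
          (R.coact b) * R.PhiRho) := by
        rw [twistedCoact_apply, map_mul, map_mul, comul_coact]; simp only [mul_assoc]
    _ = (1 : B) ⊗ₜ[k] Q.Phi * Δ₂ R.PhiRho * ι R.PhiRho
          * ι (rTensorAssoc R.coact H (R.coact b)) := by
        rw [← PhiRho_mul_rTensorAssoc_coact, map_mul, mul_assoc _ (ι R.PhiRho)]
    _ = Δ₃ R.PhiRho * ρ₂ (R.twistedCoact b) := by
        rw [pentagon, twistedCoact_apply, map_mul, coact_coact, mul_assoc]

end QuasiBialgebra

variable {k H B : Type*} [Field k] [Ring H] [Algebra k H] [Ring B] [Algebra k B]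
  {Q : QuasiHopfAlgebra k H} (R : RightComoduleAlgebra Q.toQuasiBialgebra B)

/-- The projection `E(b) = v(q¹) b₍₀₎ v(β S(q² b₍₁₎))`, as the contraction of `Φ_ρ (ρ(b) ⊗ 1)`. -/
noncomputable def canonicalProjection (v : H →ₐ[k] B) : B →ₗ[k] B :=
  Q.contract v ∘ₗ R.twistedCoact

variable {R} {v : H →ₐ[k] B}

theorem canonicalProjection_apply (b : B) :
    R.canonicalProjection v b = Q.contract v (R.twistedCoact b) :=
  rfl

theorem contract_PhiRho (hv : IsComodAlgMorphismFromH R v) : Q.contract v R.PhiRho = 1 := by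
  rw [hv.2, Q.contract_map_Phi]

theorem canonicalProjection_mul_apply (b : B) (h : H) :
    R.canonicalProjection v b * v h
      = Q.contract v (R.PhiRho * rTensorAssoc R.coact H (b ⊗ₜ[k] h)) := by
  have split : rTensorAssoc R.coact H (b ⊗ₜ[k] h)
      = rTensorAssoc R.coact H (b ⊗ₜ[k] 1) * 1 ⊗ₜ[k] (1 ⊗ₜ[k] h) := by
    have one_tmul : rTensorAssoc R.coact H (1 ⊗ₜ[k] h) = 1 ⊗ₜ[k] (1 ⊗ₜ[k] h) := by
      simp [rTensorAssoc_tmul, Algebra.TensorProduct.one_def]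
    rw [← one_tmul, ← map_mul]
    simp
  rw [split, ← mul_assoc, Q.contract_mul_one_tmul_one_tmul, canonicalProjection_apply,
    twistedCoact_apply]

theorem canonicalProjection_mul_map (hv : IsComodAlgMorphismFromH R v) (b : B) (h : H) :
    R.canonicalProjection v (b * v h) = Q.counit h • R.canonicalProjection v b := by
  have tmul_one : (b * v h) ⊗ₜ[k] (1 : H)
      = b ⊗ₜ[k] 1 * Algebra.TensorProduct.map v (AlgHom.id k H) (h ⊗ₜ[k] 1) := by simp
  rw [canonicalProjection_apply, twistedCoact_apply, tmul_one, map_mul (rTensorAssoc _ H),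
    ← mul_assoc,
    Q.contract_mul_rTensorAssoc_map v hv.1, Q.counitLeft_tmul]
  simp [canonicalProjection_apply, twistedCoact_apply]

theorem canonicalProjection_mul_canonicalProjection (hv : IsComodAlgMorphismFromH R v)
    (b c : B) : R.canonicalProjection v (b * R.canonicalProjection v c)
      = R.canonicalProjection v (b * c) := by
  have mul_contract (x : B ⊗[k] (H ⊗[k] H)) : R.canonicalProjection v (b * Q.contract v x)
      = R.canonicalProjection v (b * Q.counitRight B
          (Algebra.TensorProduct.map (AlgHom.id k B) (Q.counitLeft H) x)) := by
    obtain ⟨n, d, y, z, rfl⟩ := exists_sum_tmul_tmul_eq x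
    simp [Finset.mul_sum, Q.contract_tmul, ← mul_assoc, canonicalProjection_mul_map hv,
      Q.counitLeft_tmul, Q.counitRight_tmul, Q.counit_S, Q.counit_alpha, Q.counit_beta,
      smul_comm (Q.counit (z _))]
  rw [canonicalProjection_apply c, mul_contract, map_counitLeft_twistedCoact, Q.counitRight_tmul,
    map_one, one_smul]

theorem mul'_map_canonicalProjection_coact (hv : IsComodAlgMorphismFromH R v) (b : B) :
    LinearMap.mul' k B (TensorProduct.map (R.canonicalProjection v) v.toLinearMap (R.coact b))
      = b := by
  have mul'_map (w : B ⊗[k] H) :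
      LinearMap.mul' k B (TensorProduct.map (R.canonicalProjection v) v.toLinearMap w)
        = Q.contract v (R.PhiRho * rTensorAssoc R.coact H w) := by
    obtain ⟨n, c, h, rfl⟩ := TensorProduct.exists_sum_tmul_eq w
    simp [Finset.mul_sum, canonicalProjection_mul_apply]
  rw [mul'_map, PhiRho_mul_rTensorAssoc_coact, Q.contract_map_comul_mul, contract_PhiRho hv,
    mul_one, counitRight_coact]

theorem map_canonicalProjection_mul_map {M C P : Type*} [Semiring M] [Algebra k M] [Semiring C]
    [Algebra k C] [AddCommMonoid P] [Module k P] (hv : IsComodAlgMorphismFromH R v)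
    (F : C →ₗ[k] P) (f : M →ₐ[k] C) (w : B ⊗[k] C) (u : H ⊗[k] M) :
    TensorProduct.map (R.canonicalProjection v) F (w * Algebra.TensorProduct.map v f u)
      = TensorProduct.map (R.canonicalProjection v) F (w * 1 ⊗ₜ[k] f (Q.counitLeft M u)) := by
  have mul_tmul (h : H) (l : M) :
      TensorProduct.map (R.canonicalProjection v) F (w * v h ⊗ₜ[k] f l)
        = TensorProduct.map (R.canonicalProjection v) F (w * 1 ⊗ₜ[k] f (Q.counit h • l)) := by
    obtain ⟨n, b, c, rfl⟩ := TensorProduct.exists_sum_tmul_eq w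
    simp [Finset.sum_mul, canonicalProjection_mul_map hv, TensorProduct.smul_tmul']
  obtain ⟨m, h, l, rfl⟩ := TensorProduct.exists_sum_tmul_eq u
  simp only [map_sum, Finset.mul_sum, TensorProduct.tmul_sum, Algebra.TensorProduct.map_tmul,
    mul_tmul, Q.counitLeft_tmul]

theorem map_canonicalProjection_mul_map_PhiRho {C P : Type*} [Semiring C] [Algebra k C]
    [AddCommMonoid P] [Module k P] (hv : IsComodAlgMorphismFromH R v) (F : C →ₗ[k] P)
    (f : H ⊗[k] H →ₐ[k] C) (w : B ⊗[k] C) :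
    TensorProduct.map (R.canonicalProjection v) F
        (w * Algebra.TensorProduct.map (AlgHom.id k B) f R.PhiRho)
      = TensorProduct.map (R.canonicalProjection v) F w := by
  have map_PhiRho : Algebra.TensorProduct.map (AlgHom.id k B) f R.PhiRho
      = Algebra.TensorProduct.map v f Q.Phi := by
    rw [hv.2, ← AlgHom.comp_apply, ← Algebra.TensorProduct.map_comp, AlgHom.id_comp,
      AlgHom.comp_id]
  rw [map_PhiRho, map_canonicalProjection_mul_map hv, Q.counitLeft_Phi, map_one,
    ← Algebra.TensorProduct.one_def, mul_one]

theorem map_canonicalProjection_coact_contract (hv : IsComodAlgMorphismFromH R v)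
    (x : B ⊗[k] (H ⊗[k] H)) :
    TensorProduct.map (R.canonicalProjection v) LinearMap.id (R.coact (Q.contract v x))
      = TensorProduct.map (R.canonicalProjection v) (Q.contract (AlgHom.id k H))
          (rTensorAssoc R.coact (H ⊗[k] H) x) := by
  have map_coact_mul (b : B) (h : H) :
      TensorProduct.map (R.canonicalProjection v) LinearMap.id (R.coact (b * v h))
        = TensorProduct.map (R.canonicalProjection v) LinearMap.id
            (R.coact b * 1 ⊗ₜ[k] h) := by
    rw [map_mul, hv.1, map_canonicalProjection_mul_map hv, Q.counitLeft_comul, AlgHom.id_apply]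
  obtain ⟨n, b, y, z, rfl⟩ := exists_sum_tmul_tmul_eq x
  simp only [map_sum, Q.contract_tmul, map_coact_mul, rTensorAssoc_tmul]
  refine Finset.sum_congr rfl fun i _ => ?_
  obtain ⟨m, c, h, hc⟩ := TensorProduct.exists_sum_tmul_eq (R.coact (b i))
  simp [hc, Finset.sum_mul, TensorProduct.sum_tmul, Q.contract_tmul]

theorem map_contract_map_comul_PhiRho_mul {P : Type*} [AddCommMonoid P] [Module k P]
    (F : B →ₗ[k] P) (x : B ⊗[k] (H ⊗[k] (H ⊗[k] H))) :
    TensorProduct.map F (Q.contract (AlgHom.id k H)) (Algebra.TensorProduct.map (AlgHom.id k B)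
        (Algebra.TensorProduct.map (AlgHom.id k H) Q.comul) R.PhiRho * x)
      = TensorProduct.map F (Q.contract (AlgHom.id k H)) x := by
  have contract_tmul_one_mul (h : H) (w : H ⊗[k] (H ⊗[k] H)) :
      Q.contract (AlgHom.id k H) (h ⊗ₜ[k] 1 * w) = h * Q.contract (AlgHom.id k H) w := by
    obtain ⟨n, a, b, c, rfl⟩ := exists_sum_tmul_tmul_eq w
    simp [Finset.mul_sum, Q.contract_tmul, mul_assoc]
  calc _ = TensorProduct.map F (Q.contract (AlgHom.id k H)) (Algebra.TensorProduct.map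
          (AlgHom.id k B) ((Algebra.TensorProduct.includeLeft : H →ₐ[k] H ⊗[k] (H ⊗[k] H)).comp
            (Q.counitRight H)) R.PhiRho * x) :=
        map_map_mul_congr (f := LinearMap.id) (f' := LinearMap.id)
          (g := (Algebra.TensorProduct.map (AlgHom.id k H) Q.comul).toLinearMap)
          (g' := ((Algebra.TensorProduct.includeLeft : H →ₐ[k] H ⊗[k] (H ⊗[k] H)).comp
            (Q.counitRight H)).toLinearMap)
          (fun _ _ => rfl) (fun w c => (Q.contract_map_comul_mul _ c w).trans
            (contract_tmul_one_mul _ w).symm) _ _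
    _ = _ := by
        rw [Algebra.TensorProduct.map_id_comp, AlgHom.comp_apply, map_counitRight_PhiRho, map_one,
          one_mul]

theorem map_contract_mul_map_comul_twistedCoact {P : Type*} [AddCommMonoid P] [Module k P]
    (F : B →ₗ[k] P) (x : B ⊗[k] (H ⊗[k] (H ⊗[k] H))) (b : B) :
    TensorProduct.map F (Q.contract (AlgHom.id k H)) (x * Algebra.TensorProduct.map (AlgHom.id k B)
        (rTensorAssoc Q.comul H) (R.twistedCoact b))
      = TensorProduct.map F (Q.contract (AlgHom.id k H)) (x * b ⊗ₜ[k] 1) := by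
  set ι₃ : H →ₐ[k] H ⊗[k] (H ⊗[k] H) :=
    Algebra.TensorProduct.includeRight.comp Algebra.TensorProduct.includeRight with hι₃
  calc _ = TensorProduct.map F (Q.contract (AlgHom.id k H)) (x * Algebra.TensorProduct.map
          (AlgHom.id k B) (ι₃.comp (Q.counitLeft H)) (R.twistedCoact b)) :=
        map_mul_map_congr (f := LinearMap.id) (f' := LinearMap.id)
          (g := (rTensorAssoc Q.comul H).toLinearMap)
          (g' := (ι₃.comp (Q.counitLeft H)).toLinearMap)
          (fun _ _ => rfl) (fun c w => by
            simp [hι₃, Q.contract_id_mul_rTensorAssoc_comul, Q.contract_mul_one_tmul_one_tmul]) _ _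
    _ = _ := by
        rw [Algebra.TensorProduct.map_id_comp, AlgHom.comp_apply, map_counitLeft_twistedCoact,
          Algebra.TensorProduct.map_tmul, map_one, AlgHom.id_apply]

theorem map_canonicalProjection_coact_canonicalProjection (hv : IsComodAlgMorphismFromH R v)
    (b : B) :
    TensorProduct.map (R.canonicalProjection v) LinearMap.id
      (R.coact (R.canonicalProjection v b)) = R.canonicalProjection v b ⊗ₜ[k] 1 := by
  set G := TensorProduct.map (R.canonicalProjection v) (Q.contract (AlgHom.id k H)) with hG
  calc _ = G (rTensorAssoc R.coact (H ⊗[k] H) (R.twistedCoact b)) :=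
        map_canonicalProjection_coact_contract hv _
    _ = G (1 ⊗ₜ[k] Q.Phi * b ⊗ₜ[k] 1) := by
        rw [hG, ← map_contract_map_comul_PhiRho_mul, ← pentagon_twistedCoact,
          map_canonicalProjection_mul_map_PhiRho hv, map_contract_mul_map_comul_twistedCoact]
    _ = R.canonicalProjection v b ⊗ₜ[k] 1 := by
        simp [hG, Q.contract_id_Phi]

theorem PhiRhoInv_eq (hv : IsComodAlgMorphismFromH R v) :
    R.PhiRhoInv = Algebra.TensorProduct.map v (AlgHom.id k (H ⊗[k] H)) Q.PhiInv := by
  refine left_inv_eq_right_inv R.inv_mul_PhiRho ?_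
  rw [hv.2, ← map_mul, Q.Phi_mul_inv, map_one]

theorem mulMapLeft_map_canonicalProjection (hv : IsComodAlgMorphismFromH R v) {M : Type*}
    [Semiring M] [Algebra k M] (w : B ⊗[k] M) :
    mulMapLeft v.toLinearMap M (TensorProduct.map (R.canonicalProjection v) LinearMap.id
      (rTensorAssoc R.coact M w)) = w := by
  have mulMapLeft_assoc (u : B ⊗[k] H) (m : M) :
      mulMapLeft v.toLinearMap M (TensorProduct.map (R.canonicalProjection v) LinearMap.id
          (Algebra.TensorProduct.assoc k k k B H M (u ⊗ₜ[k] m)))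
        = LinearMap.mul' k B (TensorProduct.map (R.canonicalProjection v) v.toLinearMap u)
            ⊗ₜ[k] m := by
    obtain ⟨n, b, h, rfl⟩ := TensorProduct.exists_sum_tmul_eq u
    simp [TensorProduct.sum_tmul, mulMapLeft_tmul]
  obtain ⟨n, b, m, rfl⟩ := TensorProduct.exists_sum_tmul_eq w
  simp [rTensorAssoc_tmul, mulMapLeft_assoc, mul'_map_canonicalProjection_coact hv]

theorem coact_canonicalProjection (hv : IsComodAlgMorphismFromH R v) (b : B) :
    R.coact (R.canonicalProjection v b)
      = mulMapLeft v.toLinearMap H (TensorProduct.map (R.canonicalProjection v) LinearMap.id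
          (Algebra.TensorProduct.map v (AlgHom.id k (H ⊗[k] H)) Q.PhiInv
            * R.canonicalProjection v b ⊗ₜ[k] 1)) := by
  set a := R.canonicalProjection v b with ha
  set E₁ := TensorProduct.map (R.canonicalProjection v) (LinearMap.id : H ⊗[k] H →ₗ[k] _)
  have coassoc : rTensorAssoc R.coact H (R.coact a)
      = R.PhiRhoInv * Algebra.TensorProduct.map (AlgHom.id k B) Q.comul (R.coact a)
          * R.PhiRho := by
    rw [mul_assoc, ← PhiRho_mul_rTensorAssoc_coact, ← mul_assoc, R.inv_mul_PhiRho, one_mul]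
  have mul_PhiRho (x : B ⊗[k] (H ⊗[k] H)) : E₁ (x * R.PhiRho) = E₁ x := by
    simpa using map_canonicalProjection_mul_map_PhiRho hv LinearMap.id (AlgHom.id k (H ⊗[k] H)) x
  have mul_map_comul (x : B ⊗[k] (H ⊗[k] H)) :
      E₁ (x * Algebra.TensorProduct.map (AlgHom.id k B) Q.comul (R.coact a))
        = E₁ (x * a ⊗ₜ[k] 1) := by
    calc _ = E₁ (x * TensorProduct.map (R.canonicalProjection v) Q.comul.toLinearMap
            (R.coact a)) :=
          map_mul_map_congr (f := LinearMap.id) (g := Q.comul.toLinearMap)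
            (fun c d => (canonicalProjection_mul_canonicalProjection hv c d).symm)
            (fun _ _ => rfl) _ _
      _ = E₁ (x * TensorProduct.map LinearMap.id Q.comul.toLinearMap
            (TensorProduct.map (R.canonicalProjection v) LinearMap.id (R.coact a))) := by
          rw [← LinearMap.comp_apply (TensorProduct.map _ _), ← TensorProduct.map_comp]
          rfl
      _ = _ := by
          rw [ha, map_canonicalProjection_coact_canonicalProjection hv]
          simp
  rw [← PhiRhoInv_eq hv, ← mul_map_comul, ← mul_PhiRho, ← coassoc,
    mulMapLeft_map_canonicalProjection hv]

theorem coact_canonicalProjection_eq_sum (hv : IsComodAlgMorphismFromH R v) {ι : Type*}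
    [Fintype ι] {x₁ x₂ x₃ : ι → H} (hx : Q.PhiInv = ∑ i, x₁ i ⊗ₜ[k] (x₂ i ⊗ₜ[k] x₃ i)) (b : B) :
    R.coact (R.canonicalProjection v b)
      = ∑ i, (R.canonicalProjection v (v (x₁ i) * b) * v (x₂ i)) ⊗ₜ[k] x₃ i := by
  rw [coact_canonicalProjection hv, hx]
  simp [Finset.sum_mul, mulMapLeft_tmul, canonicalProjection_mul_canonicalProjection hv]

theorem canonicalProjection_eq_sum (hv : IsComodAlgMorphismFromH R v) {ι κ : Type*} [Fintype ι]
    [Fintype κ] {X₁ X₂ X₃ : ι → H} (hX : Q.Phi = ∑ i, X₁ i ⊗ₜ[k] (X₂ i ⊗ₜ[k] X₃ i))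
    {b : B} {b₀ : κ → B} {b₁ : κ → H} (hb : R.coact b = ∑ j, b₀ j ⊗ₜ[k] b₁ j) :
    R.canonicalProjection v b = ∑ i, ∑ j,
      v (X₁ i) * b₀ j * v (Q.beta * Q.S (Q.Sinv (Q.alpha * X₃ i) * X₂ i * b₁ j)) := by
  rw [canonicalProjection_apply, twistedCoact_apply, rTensorAssoc_tmul_one, hv.2, hX, hb]
  simp [Finset.sum_mul_sum, Q.contract_tmul, Q.S_mul, Q.S_Sinv, mul_assoc]

end RightComoduleAlgebra

theorem IsCanonicalProjection.eq_canonicalProjection {k H B : Type*} [Field k] [Ring H]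
    [Algebra k H] [Ring B] [Algebra k B] {Q : QuasiHopfAlgebra k H}
    {R : RightComoduleAlgebra Q.toQuasiBialgebra B} {v : H →ₐ[k] B}
    (hv : IsComodAlgMorphismFromH R v) {E : B →ₗ[k] B} (hE : IsCanonicalProjection Q R v E) :
    E = R.canonicalProjection v := by
  obtain ⟨n, X₁, X₂, X₃, hX⟩ := exists_sum_tmul_tmul_eq Q.Phi
  ext b
  obtain ⟨p, b₀, b₁, hb⟩ := TensorProduct.exists_sum_tmul_eq (R.coact b)
  rw [hE b n X₁ X₂ X₃ hX p b₀ b₁ hb, RightComoduleAlgebra.canonicalProjection_eq_sum hv hX hb]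

open RightComoduleAlgebra in
theorem statement11_general {k H B : Type*} [Field k] [Ring H] [Algebra k H]
    [Ring B] [Algebra k B] (Q : QuasiHopfAlgebra k H)
    (R : RightComoduleAlgebra Q.toQuasiBialgebra B)
    (v : H →ₐ[k] B) (hv : IsComodAlgMorphismFromH R v)
    (E : B →ₗ[k] B) (hE : IsCanonicalProjection Q R v E) :
    ∀ a ∈ LinearMap.range E, ∀ a' : B,
    ∀ (nq : ℕ) (X1 X2 X3 : Fin nq → H),
      Q.Phi = ∑ i, X1 i ⊗ₜ[k] (X2 i ⊗ₜ[k] X3 i) →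
    ∀ (nt : ℕ) (t1 t2 t3 : Fin nt → H),
      Q.PhiInv = ∑ i, t1 i ⊗ₜ[k] (t2 i ⊗ₜ[k] t3 i) →
    ∀ (nz : ℕ) (z1 z2 z3 : Fin nz → H),
      Q.PhiInv = ∑ i, z1 i ⊗ₜ[k] (z2 i ⊗ₜ[k] z3 i) →
    E (a * a')
      = ∑ i, ∑ it, ∑ iz,
          v (X1 i) * E (v (t1 it) * a) * v (t2 it) * E (v (z1 iz) * a')
            * v (z2 iz * Q.beta
                * Q.S (Q.Sinv (Q.alpha * X3 i) * X2 i * t3 it * z3 iz)) := by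
  rintro _ ⟨b, rfl⟩ b' nq X1 X2 X3 hX nt t1 t2 t3 ht nz z1 z2 z3 hz
  obtain rfl := hE.eq_canonicalProjection hv
  have coact_mul : R.coact (R.canonicalProjection v b * R.canonicalProjection v b')
      = ∑ s : Fin nt × Fin nz,
          (R.canonicalProjection v (v (t1 s.1) * R.canonicalProjection v b) * v (t2 s.1)
              * (R.canonicalProjection v (v (z1 s.2) * b') * v (z2 s.2)))
            ⊗ₜ[k] (t3 s.1 * z3 s.2) := by
    rw [map_mul, coact_canonicalProjection_eq_sum hv ht,
      coact_canonicalProjection_eq_sum hv hz]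
    simp [Finset.sum_mul_sum, Fintype.sum_prod_type,
      canonicalProjection_mul_canonicalProjection hv]
  rw [← canonicalProjection_mul_canonicalProjection hv,
    canonicalProjection_eq_sum hv hX coact_mul]
  simp [Fintype.sum_prod_type, mul_assoc]

/-- The explicit formula for the multiplication `a * a' = E(aa')` of the coinvariants:
`a * a' = v(q¹)(t¹ ▷ a)v(t²)(z¹ ▷ a')v(z²βS(q²t³z³))`, where `t, z` are two copies of
`Φ⁻¹` and `q_R = X¹ ⊗ S⁻¹(αX³)X²`. -/
theorem statement11 {k H B : Type*} [Field k] [Ring H] [Algebra k H]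
    [Ring B] [Algebra k B] (Q : QuasiHopfAlgebra k H)
    (R : RightComoduleAlgebra Q.toQuasiBialgebra B)
    (v : H →ₐ[k] B) (hv : IsComodAlgMorphismFromH R v)
    (E : B →ₗ[k] B) (hE : IsCanonicalProjection Q R v E) :
    ∀ a ∈ LinearMap.range E, ∀ a' ∈ LinearMap.range E,
    ∀ (nq : ℕ) (X1 X2 X3 : Fin nq → H),
      Q.Phi = ∑ i, X1 i ⊗ₜ[k] (X2 i ⊗ₜ[k] X3 i) →
    ∀ (nt : ℕ) (t1 t2 t3 : Fin nt → H),
      Q.PhiInv = ∑ i, t1 i ⊗ₜ[k] (t2 i ⊗ₜ[k] t3 i) →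
    ∀ (nz : ℕ) (z1 z2 z3 : Fin nz → H),
      Q.PhiInv = ∑ i, z1 i ⊗ₜ[k] (z2 i ⊗ₜ[k] z3 i) →
    E (a * a')
      = ∑ i, ∑ it, ∑ iz,
          v (X1 i) * E (v (t1 it) * a) * v (t2 it) * E (v (z1 iz) * a')
            * v (z2 iz * Q.beta
                * Q.S (Q.Sinv (Q.alpha * X3 i) * X2 i * t3 it * z3 iz)) := by
  intro a ha a' _
  exact statement11_general Q R v hv E hE a ha a'
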